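/- Let k be a field and P a poset that is both directed (any two elements have a common upper bound) and codirected (any two elements have a common lower bound). Let M be a pointwise finite-dimensional persistence module over P with M_p ≠ 0 for all p ∈ P, such that the structure map M_p → M_q is surjective for all p ≤ q. Then M has a direct summand isomorphic to the constant module k_P. -/

import Mathlib

namespace PMod

variable (k : Type) [Field k]

/-- A persistence module over a preordered set `P` with values in `k`-vector spaces. -/
structure PersistenceModule (P : Type) [Preorder P] where
  V : P → Type
  [addCommGroup : ∀ x, AddCommGroup (V x)]
  [module : ∀ x, Module k (V x)]
  map : ∀ {x y : P}, x ≤ y → (V x →ₗ[k] V y)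
  map_refl : ∀ x : P, map (le_refl x) = LinearMap.id
  map_trans : ∀ {x y z : P} (hxy : x ≤ y) (hyz : y ≤ z),
      map (le_trans hxy hyz) = (map hyz).comp (map hxy)

attribute [instance] PersistenceModule.addCommGroup PersistenceModule.module

variable {k}

/-- A morphism of persistence modules. -/
structure Hom {P : Type} [Preorder P] (M N : PersistenceModule k P) where
  app : ∀ x, M.V x →ₗ[k] N.V x
  natural : ∀ {x y : P} (h : x ≤ y), (N.map h).comp (app x) = (app y).comp (M.map h)

/-- A morphism of persistence modules is an isomorphism iff it is pointwise bijective. -/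
def IsIsoHom {P : Type} [Preorder P] {M N : PersistenceModule k P} (f : Hom M N) : Prop :=
  ∀ x, Function.Bijective (f.app x)

/-- Two persistence modules are isomorphic if there is a pointwise bijective
morphism between them. -/
def Isomorphic {P : Type} [Preorder P] (M N : PersistenceModule k P) : Prop :=
  ∃ f : Hom M N, IsIsoHom f

/-- The direct sum of a family of persistence modules, taken pointwise
(`Π₀` is the finitely supported product, i.e. the direct sum). -/
noncomputable def directSum {P : Type} [Preorder P] {ι : Type}
    (N : ι → PersistenceModule k P) : PersistenceModule k P where
  V x := Π₀ i, (N i).V x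
  map {x y} h := DFinsupp.mapRange.linearMap (fun i => (N i).map h)
  map_refl x := by
    have h : (fun i => (N i).map (le_refl x)) =
        fun i => (LinearMap.id : (N i).V x →ₗ[k] (N i).V x) :=
      funext fun i => (N i).map_refl x
    rw [h]
    exact DFinsupp.mapRange.linearMap_id
  map_trans {x y z} hxy hyz := by
    have h : (fun i => (N i).map (le_trans hxy hyz)) =
        fun i => ((N i).map hyz).comp ((N i).map hxy) :=
      funext fun i => (N i).map_trans hxy hyz
    rw [h]
    exact DFinsupp.mapRange.linearMap_comp _ _

/-- The binary direct sum of two persistence modules, taken pointwise. -/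
def sum2 {P : Type} [Preorder P] (M N : PersistenceModule k P) : PersistenceModule k P where
  V x := M.V x × N.V x
  map h := (M.map h).prodMap (N.map h)
  map_refl x := by
    rw [M.map_refl, N.map_refl]
    exact LinearMap.prodMap_id
  map_trans hxy hyz := by
    rw [M.map_trans hxy hyz, N.map_trans hxy hyz]
    exact (LinearMap.prodMap_comp _ _ _ _).symm

/-- The zero persistence module predicate. -/
def IsZero {P : Type} [Preorder P] (M : PersistenceModule k P) : Prop :=
  ∀ x, ∀ v : M.V x, v = 0

/-- A persistence module is indecomposable if it is nonzero and whenever it is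
isomorphic to a direct sum of two modules, one of the summands is zero. -/
def Indecomposable {P : Type} [Preorder P] (M : PersistenceModule k P) : Prop :=
  ¬ IsZero M ∧ ∀ M' M'' : PersistenceModule k P,
    Isomorphic M (sum2 M' M'') → IsZero M' ∨ IsZero M''

variable (k)

/-- A subset of a preordered set is convex. -/
def IsConvex {P : Type} [Preorder P] (I : Set P) : Prop :=
  ∀ p q r : P, p ≤ q → q ≤ r → p ∈ I → r ∈ I → q ∈ I

open Classical in
/-- The fibre of the interval module `k_I` at `x`: a copy of `k` if `x ∈ I`, else `0`. -/
noncomputable def kMod {P : Type} [Preorder P] (I : Set P) (x : P) : Submodule k k :=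
  if x ∈ I then ⊤ else ⊥

/-- The canonical generator of the fibre of the interval module at a point of `I`. -/
noncomputable def kGen {P : Type} [Preorder P] {I : Set P} {x : P} (hx : x ∈ I) :
    kMod k I x :=
  ⟨1, by simp [kMod, hx]⟩

open Classical in
/-- The structure maps of the interval module. -/
noncomputable def intervalMap {P : Type} [Preorder P] (I : Set P) {x y : P} (_ : x ≤ y) :
    kMod k I x →ₗ[k] kMod k I y where
  toFun m := if hy : y ∈ I then ⟨(m : k), by simp [kMod, hy]⟩ else 0
  map_add' a b := by
    by_cases hy : y ∈ I <;> simp [hy]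
  map_smul' c a := by
    by_cases hy : y ∈ I <;> simp [hy]

theorem kMod_coe_eq_zero {P : Type} [Preorder P] {I : Set P} {x : P} (hx : x ∉ I)
    (m : kMod k I x) : (m : k) = 0 := by
  have hm := m.2
  simp only [kMod, if_neg hx, Submodule.mem_bot] at hm
  exact hm

/-- The interval module `k_I` of a convex subset `I ⊆ P`: one-dimensional with
identity structure maps on `I`, and zero outside of `I`. -/
noncomputable def intervalModule {P : Type} [Preorder P] (I : Set P) (hI : IsConvex I) :
    PersistenceModule k P where
  V x := kMod k I x
  map h := intervalMap k I h
  map_refl x := by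
    ext m
    by_cases hx : x ∈ I
    · simp [intervalMap, hx]
    · simp [intervalMap, hx, kMod_coe_eq_zero k hx m]
  map_trans {x y z} hxy hyz := by
    ext m
    by_cases hz : z ∈ I
    · by_cases hy : y ∈ I
      · simp [intervalMap, hz, hy]
      · have hx : x ∉ I := fun hx => hy (hI x y z hxy hyz hx hz)
        simp [intervalMap, hz, hy, kMod_coe_eq_zero k hx m]
    · by_cases hy : y ∈ I <;> simp [intervalMap, hz, hy]

/-- The constant persistence module `k_P` with value `k` everywhere. -/
def constModule (P : Type) [Preorder P] : PersistenceModule k P where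
  V _ := k
  map _ := LinearMap.id
  map_refl _ := rfl
  map_trans _ _ := rfl

variable {k}

/-- Connectedness of a subset of a preordered set: any two points are joined by
a finite zigzag of comparable points inside the subset. -/
def IsConn {P : Type} [Preorder P] (I : Set P) : Prop :=
  ∀ p ∈ I, ∀ q ∈ I, ∃ (n : ℕ) (r : ℕ → P), r 0 = p ∧ r n = q ∧ (∀ i ≤ n, r i ∈ I) ∧
    ∀ i < n, r i ≤ r (i + 1) ∨ r (i + 1) ≤ r i

/-- An interval in a poset: a nonempty convex connected subset. -/
def IsInterval {P : Type} [Preorder P] (I : Set P) : Prop :=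
  I.Nonempty ∧ IsConvex I ∧ IsConn I

/-- An ideal: a subset closed under going down. -/
def IsIdeal {P : Type} [Preorder P] (I : Set P) : Prop :=
  ∀ p q : P, p ≤ q → q ∈ I → p ∈ I

/-- A filter: a subset closed under going up. -/
def IsFilter {P : Type} [Preorder P] (I : Set P) : Prop :=
  ∀ p q : P, p ≤ q → p ∈ I → q ∈ I

/-- An interval in a totally ordered set: a nonempty convex subset. -/
def IsIntervalLin {P : Type} [Preorder P] (I : Set P) : Prop :=
  I.Nonempty ∧ IsConvex I

theorem IsConvex.prod {S T : Type} [Preorder S] [Preorder T] {A : Set S} {B : Set T}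
    (hA : IsConvex A) (hB : IsConvex B) : IsConvex (A ×ˢ B) := by
  intro p q r hpq hqr hp hr
  exact ⟨hA _ _ _ hpq.1 hqr.1 hp.1 hr.1, hB _ _ _ hpq.2 hqr.2 hp.2 hr.2⟩

theorem isConvex_univ {P : Type} [Preorder P] : IsConvex (Set.univ : Set P) :=
  fun _ _ _ _ _ _ _ => trivial

/-- A block in the product of two totally ordered sets. -/
def IsBlock {S T : Type} [LinearOrder S] [LinearOrder T] (I : Set (S × T)) : Prop :=
  I.Nonempty ∧ (
    (∃ JS JT, IsIntervalLin JS ∧ IsIdeal JS ∧ IsIntervalLin JT ∧ IsIdeal JT ∧ I = JS ×ˢ JT) ∨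
    (∃ JS JT, IsIntervalLin JS ∧ IsFilter JS ∧ IsIntervalLin JT ∧ IsFilter JT ∧ I = JS ×ˢ JT) ∨
    (∃ JS, IsIntervalLin JS ∧ I = JS ×ˢ (Set.univ : Set T)) ∨
    (∃ JT, IsIntervalLin JT ∧ I = (Set.univ : Set S) ×ˢ JT))

theorem IsBlock.isConvex {S T : Type} [LinearOrder S] [LinearOrder T] {I : Set (S × T)}
    (h : IsBlock I) : IsConvex I := by
  obtain ⟨-, h | h | h | h⟩ := h
  · obtain ⟨JS, JT, hS, -, hT, -, rfl⟩ := h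
    exact hS.2.prod hT.2
  · obtain ⟨JS, JT, hS, -, hT, -, rfl⟩ := h
    exact hS.2.prod hT.2
  · obtain ⟨JS, hS, rfl⟩ := h
    exact hS.2.prod isConvex_univ
  · obtain ⟨JT, hT, rfl⟩ := h
    exact isConvex_univ.prod hT.2

/-- Convexity is inherited by preimages in a subposet. -/
theorem IsConvex.preimage {P : Type} [Preorder P] {J : Set P} (hJ : IsConvex J)
    (Q : Set P) : IsConvex {p : Q | (p : P) ∈ J} :=
  fun p q r hpq hqr hp hr => hJ p q r hpq hqr hp hr

/-- The restriction of a persistence module to a subposet. -/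
def restrict {P : Type} [Preorder P] (M : PersistenceModule k P) (Q : Set P) :
    PersistenceModule k Q where
  V q := M.V q
  map h := M.map h
  map_refl q := M.map_refl q
  map_trans hxy hyz := M.map_trans hxy hyz

/-- Middle exactness for persistence modules over a product of two totally ordered sets:
for every rectangle `a = (x,y) ≤ b = (x,y'), c = (x',y) ≤ d = (x',y')` the sequence
`M_a → M_b ⊕ M_c → M_d` is exact at `M_b ⊕ M_c`. -/
def MiddleExact {S T : Type} [Preorder S] [Preorder T]
    (M : PersistenceModule k (S × T)) : Prop :=
  ∀ (x x' : S) (y y' : T) (hx : x ≤ x') (hy : y ≤ y')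
    (mb : M.V (x, y')) (mc : M.V (x', y)),
    M.map (show (x, y') ≤ (x', y') from ⟨hx, le_refl y'⟩) mb =
      M.map (show (x', y) ≤ (x', y') from ⟨le_refl x', hy⟩) mc →
    ∃ ma : M.V (x, y),
      M.map (show (x, y) ≤ (x, y') from ⟨le_refl x, hy⟩) ma = mb ∧
      M.map (show (x, y) ≤ (x', y) from ⟨hx, le_refl y⟩) ma = mc


theorem IsIdeal.isConvex {P : Type} [Preorder P] {I : Set P} (h : IsIdeal I) : IsConvex I :=
  fun _ q r _ hqr _ hr => h q r hqr hr

theorem IsFilter.isConvex {P : Type} [Preorder P] {I : Set P} (h : IsFilter I) : IsConvex I :=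
  fun p q _ hpq _ hp _ => h p q hpq hp


/-- Convexity of the preimage of a convex subset of `T` in a subposet of `S × T`. -/
theorem IsConvex.preimageSnd {S T : Type} [Preorder S] [Preorder T] {J : Set T}
    (hJ : IsConvex J) (Q : Set (S × T)) : IsConvex {p : ↥Q | (p : S × T).2 ∈ J} :=
  fun p q r hpq hqr hp hr =>
    hJ _ _ _ (Subtype.coe_le_coe.mpr hpq).2 (Subtype.coe_le_coe.mpr hqr).2 hp hr

end PMod

namespace PMod

theorem ext_functional {k A D : Type} [Field k] [AddCommGroup A] [Module k A]
    [AddCommGroup D] [Module k D] (f : A →ₗ[k] D) (hf : Function.Injective f)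
    (g : A →ₗ[k] k) : ∃ G : D →ₗ[k] k, ∀ a, G (f a) = g a := by
  obtain ⟨l, hl⟩ := LinearMap.exists_leftInverse_of_injective f (LinearMap.ker_eq_bot.2 hf)
  refine ⟨g.comp l, fun a => ?_⟩
  have := LinearMap.congr_fun hl a
  simp at this
  simp [this]

/-- Compatible functionals extending a given functional, when all maps out of `q` are
injective. -/
theorem exists_cofunctional {k : Type} [Field k] {P : Type} [Preorder P]
    (hdir : ∀ p q : P, ∃ c, p ≤ c ∧ q ≤ c)
    (M : PersistenceModule k P) (q : P)
    (hinj : ∀ (c : P) (h : q ≤ c), Function.Injective (M.map h)) (g : M.V q →ₗ[k] k) :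
    ∃ φ : ∀ p, M.V p →ₗ[k] k, (∀ (x y : P) (h : x ≤ y) v, φ y (M.map h v) = φ x v) ∧
      φ q = g := by
  classical
  have : IsDirectedOrder P := ⟨hdir⟩
  have : Nonempty P := ⟨q⟩
  let f : ∀ i j : P, i ≤ j → M.V i →ₗ[k] M.V j := fun i j h => M.map h
  have : DirectedSystem M.V (f · · ·) :=
    ⟨fun {i} x => LinearMap.congr_fun (M.map_refl i) x,
     fun _ _ _ hij hjl x => (LinearMap.congr_fun (M.map_trans hij hjl) x).symm⟩
  have hi : Function.Injective (Module.DirectLimit.of k P M.V f q) := by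
    rw [injective_iff_map_eq_zero]
    intro a ha
    obtain ⟨j, hj, h0⟩ := Module.DirectLimit.of.zero_exact ha
    exact (injective_iff_map_eq_zero _).1 (hinj j hj) a h0
  obtain ⟨G, hG⟩ := ext_functional _ hi g
  refine ⟨fun p => G.comp (Module.DirectLimit.of k P M.V f p), fun x y h v => ?_,
    LinearMap.ext hG⟩
  exact congrArg G (Module.DirectLimit.of_f (f := f) (hij := h))

/-- The pointwise dual module, over the opposite order. -/
def dualModule {k : Type} [Field k] {P : Type} [Preorder P]
    (M : PersistenceModule k P) : PersistenceModule k Pᵒᵈ where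
  V x := Module.Dual k (M.V (OrderDual.ofDual x))
  map {x y} h := (M.map (x := OrderDual.ofDual y) (y := OrderDual.ofDual x) h).dualMap
  map_refl x := by
    rw [M.map_refl]; exact LinearMap.dualMap_id
  map_trans {x y z} hxy hyz := by
    rw [M.map_trans (x := OrderDual.ofDual z) (y := OrderDual.ofDual y)
      (z := OrderDual.ofDual x) hyz hxy]
    rfl

theorem exists_section {k : Type} [Field k] {P : Type} [Preorder P]
    (hcodir : ∀ p q : P, ∃ c, c ≤ p ∧ c ≤ q)
    (M : PersistenceModule k P) (hfd : ∀ p, FiniteDimensional k (M.V p))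
    (hsurj : ∀ (p q : P) (h : p ≤ q), Function.Surjective (M.map h)) (q : P) (v : M.V q) :
    ∃ s : ∀ p, M.V p, (∀ (x y : P) (h : x ≤ y), M.map h (s x) = s y) ∧ s q = v := by
  obtain ⟨φ, hφ, hq⟩ := exists_cofunctional (P := Pᵒᵈ) hcodir (dualModule M)
    (OrderDual.toDual q)
    (fun c h => LinearMap.dualMap_injective_of_surjective (hsurj _ _ h))
    (Module.Dual.eval k (M.V q) v)
  have key : ∀ p : P, ∃ s : M.V p, ∀ a : Module.Dual k (M.V p),
      φ (OrderDual.toDual p) a = a s := by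
    intro p
    refine ⟨(Module.evalEquiv k (M.V p)).symm (φ (OrderDual.toDual p)), fun a => ?_⟩
    exact (Module.apply_evalEquiv_symm_apply k (M.V p) a (φ (OrderDual.toDual p))).symm
  choose s hs using key
  refine ⟨s, fun x y h => ?_, ?_⟩
  · refine sub_eq_zero.1 ((Module.forall_dual_apply_eq_zero_iff k _).1 fun a => ?_)
    rw [map_sub, sub_eq_zero]
    rw [← hs y a]
    have h1 := hφ (OrderDual.toDual y) (OrderDual.toDual x) h a
    rw [← h1]
    exact (hs x (a.comp (M.map h))).symm
  · refine sub_eq_zero.1 ((Module.forall_dual_apply_eq_zero_iff k _).1 fun a => ?_)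
    rw [map_sub, sub_eq_zero]
    rw [← hs q a, hq]
    rfl

/-- The kernel of a compatible family of functionals. -/
def kerModule {k : Type} [Field k] {P : Type} [Preorder P]
    (M : PersistenceModule k P) (φ : ∀ p, M.V p →ₗ[k] k)
    (hφ : ∀ (x y : P) (h : x ≤ y) v, φ y (M.map h v) = φ x v) : PersistenceModule k P where
  V x := LinearMap.ker (φ x)
  map {x y} h := (M.map h).restrict (fun v hv => by
    rw [LinearMap.mem_ker] at hv ⊢; rw [hφ, hv])
  map_refl x := by
    ext v
    exact LinearMap.congr_fun (M.map_refl x) v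
  map_trans {x y z} hxy hyz := by
    ext v
    exact LinearMap.congr_fun (M.map_trans hxy hyz) v

theorem splits {k : Type} [Field k] {P : Type} [Preorder P]
    (M : PersistenceModule k P) (φ : ∀ p, M.V p →ₗ[k] k)
    (hφ : ∀ (x y : P) (h : x ≤ y) v, φ y (M.map h v) = φ x v)
    (s : ∀ p, M.V p) (hs : ∀ (x y : P) (h : x ≤ y), M.map h (s x) = s y)
    (h1 : ∀ p, φ p (s p) = 1) :
    Isomorphic M (sum2 (constModule k P) (kerModule M φ hφ)) := by
  let r : ∀ x, M.V x →ₗ[k] LinearMap.ker (φ x) := fun x =>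
    LinearMap.codRestrict (LinearMap.ker (φ x))
      (LinearMap.id - (φ x).smulRight (s x)) (fun v => by simp [h1])
  refine ⟨⟨fun x => (φ x).prod (r x), ?_⟩, fun x => ⟨?_, ?_⟩⟩
  · intro x y h
    refine LinearMap.ext fun v => Prod.ext (hφ x y h v).symm (Subtype.ext ?_)
    change M.map h (v - φ x v • s x) = M.map h v - φ y (M.map h v) • s y
    rw [map_sub, map_smul, hs, hφ]
  · intro v w hvw
    have ha : φ x v = φ x w := congrArg Prod.fst hvw
    have hb : v - φ x v • s x = w - φ x w • s x :=
      congrArg (fun t : k × LinearMap.ker (φ x) => (t.2 : M.V x)) hvw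
    rw [ha] at hb
    exact sub_left_injective hb
  · rintro ⟨c, w, hw⟩
    change k at c
    change M.V x at w
    have hw' : φ x w = 0 := hw
    have e : φ x (c • s x + w) = c := by simp [h1, hw']
    refine ⟨c • s x + w, Prod.ext e (Subtype.ext ?_)⟩
    change (c • s x + w) - φ x (c • s x + w) • s x = w
    rw [e]; abel

end PMod

open PMod in
/-- Lemma 2.3: over a directed and codirected poset, a pointwise finite-dimensional
module with everywhere nonzero fibres and surjective structure maps has the constant
module as a direct summand. -/
theorem stmt7 {k : Type} [Field k] {P : Type} [PartialOrder P]
    (hdir : ∀ p q : P, ∃ c, p ≤ c ∧ q ≤ c)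
    (hcodir : ∀ p q : P, ∃ c, c ≤ p ∧ c ≤ q)
    (M : PersistenceModule k P)
    (hfd : ∀ p, FiniteDimensional k (M.V p))
    (hne : ∀ p, ∃ v : M.V p, v ≠ 0)
    (hsurj : ∀ (p q : P) (h : p ≤ q), Function.Surjective (M.map h)) :
    ∃ M'' : PersistenceModule k P,
      Isomorphic M (sum2 (constModule k P) M'') := by
  rcases isEmpty_or_nonempty P with hP | hP
  · exact ⟨M, ⟨fun x => hP.elim x, fun {x} => hP.elim x⟩, fun x => hP.elim x⟩
  obtain ⟨q, hq⟩ : ∃ q : P, ∀ p, Module.finrank k (M.V q) ≤ Module.finrank k (M.V p) := by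
    refine ⟨Function.argmin (fun p => Module.finrank k (M.V p)), fun p => ?_⟩
    exact Function.argmin_le (fun p => Module.finrank k (M.V p)) p
  have hinj : ∀ (c : P) (h : q ≤ c), Function.Injective (M.map h) := fun c h =>
    (LinearMap.injective_iff_surjective_of_finrank_eq_finrank
      (le_antisymm (hq c) (LinearMap.finrank_le_finrank_of_surjective (hsurj q c h)))).2
      (hsurj q c h)
  obtain ⟨v, hv⟩ := hne q
  obtain ⟨g, hg⟩ := Module.Projective.exists_dual_eq_one k hv
  obtain ⟨φ, hφ, rfl⟩ := exists_cofunctional hdir M q hinj g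
  obtain ⟨s, hs, rfl⟩ := exists_section hcodir M hfd hsurj q v
  refine ⟨kerModule M φ hφ, splits M φ hφ s hs fun p => ?_⟩
  obtain ⟨c, hpc, hqc⟩ := hdir p q
  rw [← hφ p c hpc, hs, ← hs q c hqc, hφ, hg]
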